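/- Let A be a linear relation in a finite-dimensional complex vector space H with R_c(A) = {0}. Let λ_1, …, λ_k ∈ ℂ ∪ {∞} be pairwise distinct eigenvalues of A and let x_i ∈ R_{λ_i}(A) with x_i ≠ 0 for i = 1, …, k. Then x_1, …, x_k are linearly independent, and consequently the point spectrum satisfies |σ_p(A)| ≤ dim H. -/

import Mathlib

/-!
Write `R = R_∞(A)`. Since `A` maps elements of `R` only to elements of `R`, it induces a
single-valued partial operator on `H ⧸ R`, which extends to an everywhere defined endomorphism `T`
with `T [x] = [y]` for all `(x, y) ∈ A` (`exists_quotient_end`). Then `R_lam(A)` is mapped into the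
generalized eigenspace of `T` at `lam`, and generalized eigenspaces of an endomorphism are
independent.

The hypothesis `R_c(A) = {0}` enters through `R_lam(A) ∩ R_∞(A) = {0}` for every finite `lam`
(`eq_zero_of_mem_rootSpace_of_mem_rootInf`), so nonzero root vectors at finite eigenvalues stay
nonzero in `H ⧸ R`. Thus in a linear relation between root vectors at distinct eigenvalues the
coefficients at finite eigenvalues vanish, and the only possible remaining term, a multiple of a
nonzero vector at `∞`, has zero coefficient too. The bound on the point spectrum
follows by choosing one eigenvector for each eigenvalue.
-/

open Submodule Set

variable {H : Type*} [AddCommGroup H] [Module ℂ H]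

/-- A linear relation in `H`: a linear subspace of the product `H × H`. -/
abbrev LinRel (H : Type*) [AddCommGroup H] [Module ℂ H] : Type _ := Submodule ℂ (H × H)

namespace LinRel

/-- The relation `A - λ = {(x, y - λ x) : (x,y) ∈ A}`. -/
def shift (A : LinRel H) (lam : ℂ) : LinRel H :=
  A.map ((LinearMap.fst ℂ H H).prod (LinearMap.snd ℂ H H - lam • LinearMap.fst ℂ H H))

/-- The relation `λ A = {(x, λ y) : (x,y) ∈ A}`. -/
def smulRel (lam : ℂ) (A : LinRel H) : LinRel H :=
  A.map ((LinearMap.fst ℂ H H).prod (lam • LinearMap.snd ℂ H H))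

/-- The inverse relation `A⁻¹ = {(y,x) : (x,y) ∈ A}`. -/
def inv (A : LinRel H) : LinRel H :=
  A.map ((LinearMap.snd ℂ H H).prod (LinearMap.fst ℂ H H))

/-- The product (composition) `A B = {(x,y) : ∃ z, (x,z) ∈ B ∧ (z,y) ∈ A}`. -/
def comp (A B : LinRel H) : LinRel H where
  carrier := {p | ∃ z, (p.1, z) ∈ B ∧ (z, p.2) ∈ A}
  zero_mem' := ⟨0, B.zero_mem, A.zero_mem⟩
  add_mem' := by
    rintro p q ⟨z1, h1, h2⟩ ⟨z2, h3, h4⟩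
    exact ⟨z1 + z2, B.add_mem h1 h3, A.add_mem h2 h4⟩
  smul_mem' := by
    rintro c p ⟨z, h1, h2⟩
    exact ⟨c • z, B.smul_mem c h1, A.smul_mem c h2⟩

/-- The identity relation `I = {(x,x) : x ∈ H}`. -/
def idRel : LinRel H := LinearMap.graph (LinearMap.id : H →ₗ[ℂ] H)

/-- Powers: `A⁰ = I` and `Aᵏ = A · Aᵏ⁻¹`. -/
def pow (A : LinRel H) : ℕ → LinRel H
  | 0 => idRel
  | (k+1) => comp A (pow A k)

/-- The kernel `ker A = {x : (x,0) ∈ A}`. -/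
def ker (A : LinRel H) : Submodule ℂ H := A.comap (LinearMap.inl ℂ H H)

/-- The multivalued part `mul A = {y : (0,y) ∈ A}`. -/
def mul (A : LinRel H) : Submodule ℂ H := A.comap (LinearMap.inr ℂ H H)

lemma mem_ker {A : LinRel H} {x : H} : x ∈ ker A ↔ (x, (0:H)) ∈ A := by
  simp [ker, Submodule.mem_comap]

lemma mem_mul {A : LinRel H} {y : H} : y ∈ mul A ↔ ((0:H), y) ∈ A := by
  simp [mul, Submodule.mem_comap]

lemma ker_pow_le_succ (A : LinRel H) (i : ℕ) : ker (pow A i) ≤ ker (pow A (i+1)) := by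
  intro x hx
  rw [mem_ker] at hx ⊢
  exact ⟨0, hx, A.zero_mem⟩

lemma ker_pow_mono (A : LinRel H) : Monotone fun i => ker (pow A i) :=
  monotone_nat_of_le_succ (ker_pow_le_succ A)

lemma mul_pow_le_succ (A : LinRel H) : ∀ i, mul (pow A i) ≤ mul (pow A (i+1)) := by
  intro i
  induction i with
  | zero =>
    intro y hy
    rw [mem_mul] at hy ⊢
    have : y = 0 := by simpa [pow, idRel, LinearMap.mem_graph_iff] using hy
    subst this
    exact Submodule.zero_mem _
  | succ i ih =>
    intro y hy
    rw [mem_mul] at hy ⊢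
    obtain ⟨w, hw, hwy⟩ := hy
    exact ⟨w, mem_mul.mp (ih (mem_mul.mpr hw)), hwy⟩

lemma mul_pow_mono (A : LinRel H) : Monotone fun i => mul (pow A i) :=
  monotone_nat_of_le_succ (mul_pow_le_succ A)

/-- The root space `R_λ(A) = ⋃_{i ≥ 1} ker (A - λ)ⁱ`. -/
def rootSpace (A : LinRel H) (lam : ℂ) : Submodule ℂ H where
  carrier := ⋃ i : ℕ, (ker (pow (shift A lam) (i+1)) : Set H)
  zero_mem' := Set.mem_iUnion.2 ⟨0, Submodule.zero_mem _⟩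
  add_mem' := by
    intro a b ha hb
    obtain ⟨i, hi⟩ := Set.mem_iUnion.1 ha
    obtain ⟨j, hj⟩ := Set.mem_iUnion.1 hb
    exact Set.mem_iUnion.2 ⟨max i j, Submodule.add_mem _
      (ker_pow_mono _ (by omega : i + 1 ≤ max i j + 1) hi)
      (ker_pow_mono _ (by omega : j + 1 ≤ max i j + 1) hj)⟩
  smul_mem' := by
    intro c a ha
    obtain ⟨i, hi⟩ := Set.mem_iUnion.1 ha
    exact Set.mem_iUnion.2 ⟨i, Submodule.smul_mem _ c hi⟩

/-- The root space at infinity `R_∞(A) = ⋃_{i ≥ 1} mul Aⁱ`. -/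
def rootInf (A : LinRel H) : Submodule ℂ H where
  carrier := ⋃ i : ℕ, (mul (pow A (i+1)) : Set H)
  zero_mem' := Set.mem_iUnion.2 ⟨0, Submodule.zero_mem _⟩
  add_mem' := by
    intro a b ha hb
    obtain ⟨i, hi⟩ := Set.mem_iUnion.1 ha
    obtain ⟨j, hj⟩ := Set.mem_iUnion.1 hb
    exact Set.mem_iUnion.2 ⟨max i j, Submodule.add_mem _
      (mul_pow_mono _ (by omega : i + 1 ≤ max i j + 1) hi)
      (mul_pow_mono _ (by omega : j + 1 ≤ max i j + 1) hj)⟩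
  smul_mem' := by
    intro c a ha
    obtain ⟨i, hi⟩ := Set.mem_iUnion.1 ha
    exact Set.mem_iUnion.2 ⟨i, Submodule.smul_mem _ c hi⟩

/-- The singular chain space `R_c(A) = R_0(A) ∩ R_∞(A)`. -/
def singChain (A : LinRel H) : Submodule ℂ H := rootSpace A 0 ⊓ rootInf A

/-- The root space at a point of `ℂ ∪ {∞}` (modelled as `Option ℂ`, with `none = ∞`). -/
def rootSpaceE (A : LinRel H) : Option ℂ → Submodule ℂ H
  | none => rootInf A
  | some lam => rootSpace A lam

/-- `λ ∈ ℂ ∪ {∞}` is an eigenvalue of `A`. -/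
def isEigenvalue (A : LinRel H) : Option ℂ → Prop
  | none => mul A ≠ ⊥
  | some lam => ker (shift A lam) ≠ ⊥

end LinRel

namespace LinRel

lemma mem_shift {A : LinRel H} {c : ℂ} {x y : H} :
    (x, y) ∈ shift A c ↔ (x, y + c • x) ∈ A := by
  simp only [shift, Submodule.mem_map]
  constructor
  · rintro ⟨⟨a, b⟩, h, e⟩
    obtain ⟨rfl, rfl⟩ : a = x ∧ b - c • a = y := Prod.mk.inj e
    simpa using h
  · intro h
    exact ⟨_, h, by simp⟩

lemma mem_pow_zero {A : LinRel H} {x y : H} : (x, y) ∈ pow A 0 ↔ y = x := by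
  simp [pow, idRel, LinearMap.mem_graph_iff]

lemma mem_pow_succ {A : LinRel H} {i : ℕ} {x y : H} :
    (x, y) ∈ pow A (i + 1) ↔ ∃ z, (x, z) ∈ pow A i ∧ (z, y) ∈ A := Iff.rfl

lemma mem_pow_one {A : LinRel H} {x y : H} : (x, y) ∈ pow A 1 ↔ (x, y) ∈ A := by
  simp [mem_pow_succ, mem_pow_zero]

lemma mem_rootSpace {A : LinRel H} {c : ℂ} {x : H} :
    x ∈ rootSpace A c ↔ ∃ i : ℕ, (x, (0 : H)) ∈ pow (shift A c) (i + 1) := by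
  change x ∈ (⋃ i : ℕ, (ker (pow (shift A c) (i + 1)) : Set H)) ↔ _
  simp [mem_ker]

lemma mem_rootInf {A : LinRel H} {x : H} :
    x ∈ rootInf A ↔ ∃ i : ℕ, ((0 : H), x) ∈ pow A (i + 1) := by
  change x ∈ (⋃ i : ℕ, (mul (pow A (i + 1)) : Set H)) ↔ _
  simp [mem_mul]

lemma mem_rootInf_of_mem_pow {A : LinRel H} {x : H} :
    ∀ {i : ℕ}, ((0 : H), x) ∈ pow A i → x ∈ rootInf A
  | 0, h => by rw [mem_pow_zero.1 h]; exact Submodule.zero_mem _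
  | i + 1, h => mem_rootInf.2 ⟨i, h⟩

/-- The relation `A` leaves `R_∞(A)` invariant. -/
lemma rootInf_step {A : LinRel H} {x y : H} (hx : x ∈ rootInf A) (h : (x, y) ∈ A) :
    y ∈ rootInf A := by
  obtain ⟨i, hi⟩ := mem_rootInf.1 hx
  exact mem_rootInf.2 ⟨i + 1, x, hi, h⟩

lemma rootInf_pow_shift {A : LinRel H} {c : ℂ} (i : ℕ) {x y : H} (hx : x ∈ rootInf A)
    (h : (x, y) ∈ pow (shift A c) i) : y ∈ rootInf A := by
  induction i generalizing y with
  | zero => rwa [mem_pow_zero.1 h]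
  | succ i ih =>
    obtain ⟨z, hz, hzy⟩ := h
    have h1 := rootInf_step (ih hz) (mem_shift.1 hzy)
    simpa using Submodule.sub_mem _ h1 (Submodule.smul_mem _ c (ih hz))

/-- If `R_c(A) = {0}`, then `A` has trivial kernel on `R_∞(A)`, so that predecessors within
`R_∞(A)` are unique. -/
lemma eq_zero_of_mem_ker {A : LinRel H} (hc : singChain A = ⊥) {x : H} (hx : x ∈ rootInf A)
    (h : (x, (0 : H)) ∈ A) : x = 0 := by
  have : x ∈ singChain A := by
    refine ⟨mem_rootSpace.2 ⟨0, ?_⟩, hx⟩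
    rw [zero_add, mem_pow_one, mem_shift]
    simpa using h
  rwa [hc, Submodule.mem_bot] at this

/-- `R_∞(A)` contains no eigenvector at a finite `c`. If `z` in `mul Aⁱ` is a predecessor of an
eigenvector `x` in `mul Aⁱ⁺¹`, then `c • z` and `x` are both predecessors of `c • x`, so they agree
and `x` already lies in `mul Aⁱ`; descend to `mul A⁰ = {0}`. -/
lemma eq_zero_of_eigenvector {A : LinRel H} (hc : singChain A = ⊥) {c : ℂ} {x : H}
    (h : (x, c • x) ∈ A) : ∀ i : ℕ, ((0 : H), x) ∈ pow A i → x = 0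
  | 0, hi => mem_pow_zero.1 hi
  | i + 1, hi => by
    obtain ⟨z, hz, hzx⟩ := hi
    have h0 : x - c • z = 0 := by
      refine eq_zero_of_mem_ker hc ?_ ?_
      · exact Submodule.sub_mem _ (mem_rootInf_of_mem_pow (i := i + 1) ⟨z, hz, hzx⟩)
          (Submodule.smul_mem _ c (mem_rootInf_of_mem_pow hz))
      · simpa using A.sub_mem h (A.smul_mem c hzx)
    refine eq_zero_of_eigenvector hc h i ?_
    rw [sub_eq_zero.1 h0]
    simpa using (pow A i).smul_mem c hz

/-- If the singular chain space is trivial, then every finite root space meets `R_∞(A)` trivially: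
a root chain starting in `R_∞(A)` stays in `R_∞(A)`, so it would end in an eigenvector there. -/
lemma eq_zero_of_mem_rootSpace_of_mem_rootInf {A : LinRel H} (hc : singChain A = ⊥) {c : ℂ}
    {x : H} (hx : x ∈ rootSpace A c) (hx' : x ∈ rootInf A) : x = 0 := by
  obtain ⟨i, hi⟩ := mem_rootSpace.1 hx
  suffices ∀ i : ℕ, (x, (0 : H)) ∈ pow (shift A c) i → x = 0 from this _ hi
  intro i
  induction i with
  | zero => exact fun h => (mem_pow_zero.1 h).symm
  | succ i ih =>
    rintro ⟨z, hz, hz0⟩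
    obtain ⟨j, hj⟩ := mem_rootInf.1 (rootInf_pow_shift i hx' hz)
    have h1 : (z, c • z) ∈ A := by simpa using mem_shift.1 hz0
    rw [eq_zero_of_eigenvector hc h1 _ hj] at hz
    exact ih hz

/-- The relation induced by `A` on `H ⧸ R_∞(A)` is contained in the graph of an endomorphism. With
`g` and `f` the classes of the first and second coordinate of an element of `A`, invariance of
`R_∞(A)` gives `ker g ≤ ker f`; the endomorphism sends a class through a left inverse of the
injection `A ⧸ ker g → H ⧸ R_∞(A)` and then through the map induced by `f`. -/
lemma exists_quotient_end (A : LinRel H) :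
    ∃ T : Module.End ℂ (H ⧸ rootInf A), ∀ x y : H, (x, y) ∈ A →
      T ((rootInf A).mkQ x) = (rootInf A).mkQ y := by
  let g : A →ₗ[ℂ] H ⧸ rootInf A := (rootInf A).mkQ ∘ₗ LinearMap.fst ℂ H H ∘ₗ A.subtype
  let f : A →ₗ[ℂ] H ⧸ rootInf A := (rootInf A).mkQ ∘ₗ LinearMap.snd ℂ H H ∘ₗ A.subtype
  have hgf : LinearMap.ker g ≤ LinearMap.ker f := by
    rintro ⟨⟨x, y⟩, h⟩ hx
    have hx' : x ∈ rootInf A := by simpa [g] using hx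
    simpa [f] using rootInf_step hx' h
  obtain ⟨r, hr⟩ := LinearMap.exists_leftInverse_of_injective
    ((LinearMap.ker g).liftQ g le_rfl) (Submodule.ker_liftQ_eq_bot _ _ _ le_rfl)
  refine ⟨(LinearMap.ker g).liftQ f hgf ∘ₗ r, fun x y h => ?_⟩
  have h1 := LinearMap.congr_fun hr ((LinearMap.ker g).mkQ ⟨(x, y), h⟩)
  have h2 : r ((rootInf A).mkQ x) = (LinearMap.ker g).mkQ ⟨(x, y), h⟩ := h1
  rw [LinearMap.comp_apply, h2]
  rfl

/-- Chains of `A - c` become orbits of `T - c`, so `T` turns root vectors of `A` into generalized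
eigenvectors. -/
lemma end_pow_apply {A : LinRel H} {T : Module.End ℂ (H ⧸ rootInf A)}
    (hT : ∀ x y : H, (x, y) ∈ A → T ((rootInf A).mkQ x) = (rootInf A).mkQ y) {c : ℂ} (i : ℕ)
    {x y : H} (h : (x, y) ∈ pow (shift A c) i) :
    ((T - c • (1 : Module.End ℂ (H ⧸ rootInf A))) ^ i) ((rootInf A).mkQ x) =
      (rootInf A).mkQ y := by
  induction i generalizing y with
  | zero => rw [mem_pow_zero.1 h]; simp
  | succ i ih =>
    obtain ⟨z, hz, hzy⟩ := h
    rw [pow_succ', Module.End.mul_apply, ih hz, LinearMap.sub_apply, hT _ _ (mem_shift.1 hzy),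
      LinearMap.smul_apply, Module.End.one_apply, map_add, map_smul, add_sub_cancel_right]

/-- Nonzero root vectors at distinct points of `ℂ ∪ {∞}` are linearly independent, for an
arbitrary index type. -/
lemma linearIndependent_of_rootSpaceE {A : LinRel H} (hc : singChain A = ⊥) {ι : Type*}
    {lam : ι → Option ℂ} (hdist : Function.Injective lam) {x : ι → H}
    (hx : ∀ i, x i ∈ rootSpaceE A (lam i)) (hx0 : ∀ i, x i ≠ 0) : LinearIndependent ℂ x := by
  classical
  obtain ⟨T, hT⟩ := exists_quotient_end A
  have hfin : LinearIndependent ℂ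
      (fun i : {i // lam i ≠ none} => (rootInf A).mkQ (x i)) := by
    have hsome : ∀ i : {i // lam i ≠ none}, ∃ c : ℂ, lam i = some c :=
      fun i => Option.ne_none_iff_exists'.1 i.2
    choose c hlam using hsome
    have hinj : Function.Injective c := fun i j hij =>
      Subtype.ext (hdist (by rw [hlam, hlam, hij]))
    have hmem : ∀ i : {i // lam i ≠ none}, x i ∈ rootSpace A (c i) := by
      intro i
      have := hx i
      rwa [hlam] at this
    refine (T.independent_maxGenEigenspace.comp hinj).linearIndependent _ (fun i => ?_)
      (fun i h => ?_)
    · obtain ⟨n, hn⟩ := mem_rootSpace.1 (hmem i)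
      refine Module.End.mem_maxGenEigenspace _ _ _ |>.2 ⟨n + 1, ?_⟩
      rw [end_pow_apply hT _ hn, map_zero]
    · exact hx0 i (eq_zero_of_mem_rootSpace_of_mem_rootInf hc (hmem i) (by simpa using h))
  rw [linearIndependent_iff'] at hfin ⊢
  intro s g hg
  have hmap : ∑ i ∈ s, g i • (rootInf A).mkQ (x i) = 0 := by
    simpa using congrArg (rootInf A).mkQ hg
  have hzero : ∀ i ∈ s, lam i ≠ none → g i = 0 := by
    intro i hi hne
    refine hfin (s.subtype fun i => lam i ≠ none) (fun i => g i) ?_ ⟨i, hne⟩ (by simpa using hi)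
    rw [Finset.sum_subtype_eq_sum_filter (f := fun i => g i • (rootInf A).mkQ (x i)),
      Finset.sum_filter_of_ne, hmap]
    intro j _ hj hnone
    have hj' := hx j
    rw [hnone] at hj'
    have hj0 : (rootInf A).mkQ (x j) = 0 := (Submodule.Quotient.mk_eq_zero _).2 hj'
    exact hj (by rw [hj0, smul_zero])
  intro i hi
  by_cases hne : lam i = none
  · rw [Finset.sum_eq_single_of_mem i hi] at hg
    · exact (smul_eq_zero.1 hg).resolve_right (hx0 i)
    · intro j hj hji
      rw [hzero j hj (fun h => hji (hdist (h.trans hne.symm))), zero_smul]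
  · exact hzero i hi hne

lemma exists_mem_rootSpaceE {A : LinRel H} {mu : Option ℂ} (h : isEigenvalue A mu) :
    ∃ x ∈ rootSpaceE A mu, x ≠ 0 := by
  cases mu with
  | none =>
    obtain ⟨x, hx, hx0⟩ := Submodule.exists_mem_ne_zero_of_ne_bot h
    exact ⟨x, mem_rootInf.2 ⟨0, mem_pow_one.2 (mem_mul.1 hx)⟩, hx0⟩
  | some c =>
    obtain ⟨x, hx, hx0⟩ := Submodule.exists_mem_ne_zero_of_ne_bot h
    exact ⟨x, mem_rootSpace.2 ⟨0, mem_pow_one.2 (mem_ker.1 hx)⟩, hx0⟩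

end LinRel

/-- if `R_c(A) = {0}` in a finite-dimensional space, nontrivial
root vectors at pairwise distinct eigenvalues are linearly independent, and
consequently `|σ_p(A)| ≤ dim H`. -/
theorem statement_17 (A : LinRel H) [FiniteDimensional ℂ H]
    (hc : LinRel.singChain A = ⊥)
    (k : ℕ) (lam : Fin k → Option ℂ) (hdist : Function.Injective lam)
    (heig : ∀ i, LinRel.isEigenvalue A (lam i))
    (x : Fin k → H) (hx : ∀ i, x i ∈ LinRel.rootSpaceE A (lam i))
    (hx0 : ∀ i, x i ≠ 0) :
    LinearIndependent ℂ x ∧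
      {mu : Option ℂ | LinRel.isEigenvalue A mu}.Finite ∧
      {mu : Option ℂ | LinRel.isEigenvalue A mu}.ncard ≤ Module.finrank ℂ H := by
  refine ⟨LinRel.linearIndependent_of_rootSpaceE hc hdist hx hx0, ?_⟩
  choose v hv hv0 using fun mu : {mu : Option ℂ | LinRel.isEigenvalue A mu} =>
    LinRel.exists_mem_rootSpaceE mu.2
  have hli : LinearIndependent ℂ v :=
    LinRel.linearIndependent_of_rootSpaceE hc Subtype.val_injective hv hv0
  have hfin : Finite {mu : Option ℂ | LinRel.isEigenvalue A mu} := hli.finite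
  refine ⟨Set.toFinite _, ?_⟩
  have := Fintype.ofFinite {mu : Option ℂ | LinRel.isEigenvalue A mu}
  rw [← Nat.card_coe_set_eq, Nat.card_eq_fintype_card]
  exact hli.fintype_card_le_finrank
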